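/- Let T = (V, root, par) be a leafless, locally finite rooted directed tree of finite branching index, and suppose the bounded Cesàro operator C_T on ℓ²(V) is hyponormal, i.e. ‖C_T* f‖ ≤ ‖C_T f‖ for all f ∈ ℓ²(V). Then T has no branching vertex: card(Chi(v)) = 1 for every v ∈ V (so T is isomorphic to the chain tree on ℕ in which each n has the unique child n+1). -/

import Mathlib

noncomputable section

open scoped ENNReal

/-- A rooted directed tree encoded by a vertex set `V`, a root, and a parent map. -/
structure TreeData (V : Type) where
  root : V
  par : V → V
  par_root : par root = root
  hroot : ∀ v : V, ∃ n : ℕ, par^[n] v = root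

namespace TreeData

variable {V : Type}

open scoped Classical in
/-- The depth of a vertex: the least `n` with `par^[n] v = root`. -/
def dep (T : TreeData V) (v : V) : ℕ := Nat.find (T.hroot v)

/-- The Cesàro map `Λ_T`. -/
def cesaro (T : TreeData V) (f : V → ℂ) : V → ℂ := fun v =>
  ((T.dep v : ℂ) + 1)⁻¹ * ∑ j ∈ Finset.range (T.dep v + 1), f (T.par^[j] v)

/-- The `n`-th level `Chi^⟨n⟩(root)`: vertices of depth `n`. -/
def level (T : TreeData V) (n : ℕ) : Set V := {v : V | T.dep v = n}

/-- The set of children of a vertex. -/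
def chi (T : TreeData V) (u : V) : Set V := {v : V | v ≠ T.root ∧ T.par v = u}

end TreeData

/-- The Hilbert space `ℓ²(V)` of square-summable complex functions on `V`. -/
abbrev L2 (V : Type) : Type := lp (fun _ : V => ℂ) 2

/-- A branching vertex: a vertex with at least two children. -/
def TreeData.branching {V : Type} (T : TreeData V) (v : V) : Prop := 2 ≤ (T.chi v).encard

/-!
If some vertex branches, leaflessness produces two vertices `x ≠ y` of a common depth `d > 0`
below which nothing branches any more. Test hyponormality on `e_x + e_y`. The vectors `C e_x` and
`C e_y` live on disjoint rays, so they are orthogonal and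
`‖C (e_x + e_y)‖² = 2 ∑_{n ≥ d} (n + 1)⁻² ≤ 2 / (d + 1/2)`. On the other side `C* e_v` is the
uniform average over the path from the root to `v`; the paths to `x` and `y` share the root, so
`‖C* (e_x + e_y)‖² ≥ 2 / (d + 1) + 2 / (d + 1)²`, which is strictly larger.
-/

lemma inv_sq_add_one_le_sub {K : Type*} [Field K] [LinearOrder K] [IsStrictOrderedRing K] {x : K}
    (hx : 0 ≤ x) : ((x + 1) ^ 2)⁻¹ ≤ (x + 1 / 2)⁻¹ - (x + 1 + 1 / 2)⁻¹ := by
  rw [inv_sub_inv (by positivity) (by positivity), inv_eq_one_div,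
    div_le_div_iff₀ (by positivity) (by positivity)]
  linarith

lemma sum_inv_sq_add_one_le {d : ℕ} (s : Finset ℕ) (hs : ∀ n ∈ s, d ≤ n) :
    ∑ n ∈ s, (((n : ℝ) + 1) ^ 2)⁻¹ ≤ ((d : ℝ) + 1 / 2)⁻¹ := by
  have sum_Ico_le (N : ℕ) (hN : d ≤ N) : ∑ n ∈ Finset.Ico d N, (((n : ℝ) + 1) ^ 2)⁻¹ ≤
      ((d : ℝ) + 1 / 2)⁻¹ - ((N : ℝ) + 1 / 2)⁻¹ := by
    induction N, hN using Nat.le_induction with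
    | base => simp
    | succ N hN ih =>
      rw [Finset.sum_Ico_succ_top hN]
      push_cast
      linarith [inv_sq_add_one_le_sub (Nat.cast_nonneg (α := ℝ) N)]
  obtain ⟨N, hN⟩ := s.bddAbove
  have hsub : s ⊆ Finset.Ico d (max d (N + 1)) := fun n hn =>
    Finset.mem_Ico.mpr ⟨hs n hn, lt_max_of_lt_right (Nat.lt_succ_of_le (hN hn))⟩
  calc ∑ n ∈ s, (((n : ℝ) + 1) ^ 2)⁻¹
      ≤ ∑ n ∈ Finset.Ico d (max d (N + 1)), (((n : ℝ) + 1) ^ 2)⁻¹ :=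
        Finset.sum_le_sum_of_subset_of_nonneg hsub fun _ _ _ => by positivity
    _ ≤ ((d : ℝ) + 1 / 2)⁻¹ - (((max d (N + 1) : ℕ) : ℝ) + 1 / 2)⁻¹ :=
        sum_Ico_le _ (le_max_left _ _)
    _ ≤ ((d : ℝ) + 1 / 2)⁻¹ := sub_le_self _ (by positivity)

lemma inv_add_half_lt {K : Type*} [Field K] [LinearOrder K] [IsStrictOrderedRing K] {x : K}
    (hx : 0 < x) : (x + 1 / 2)⁻¹ < (x + 1)⁻¹ + ((x + 1) ^ 2)⁻¹ := by
  have hsum : (x + 1)⁻¹ + ((x + 1) ^ 2)⁻¹ = (x + 2) / (x + 1) ^ 2 := by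
    field_simp
    ring
  rw [hsum, inv_eq_one_div, div_lt_div_iff₀ (by positivity) (by positivity)]
  linarith

namespace TreeData

variable {V : Type} (T : TreeData V)

lemma dep_eq_zero_iff {v : V} : T.dep v = 0 ↔ v = T.root := by
  classical
  exact Nat.find_eq_zero (T.hroot v)

lemma dep_par (v : V) : T.dep (T.par v) = T.dep v - 1 := by
  classical
  by_cases hv : v = T.root
  · rw [hv, T.par_root, T.dep_eq_zero_iff.mpr rfl]
  · have hstep : T.dep v = T.dep (T.par v) + 1 := Nat.find_comp_succ (T.hroot v) (T.hroot _) hv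
    rw [hstep, Nat.add_sub_cancel]

lemma dep_iterate_par (j : ℕ) (v : V) : T.dep (T.par^[j] v) = T.dep v - j := by
  induction j with
  | zero => rfl
  | succ j ih => rw [Function.iterate_succ_apply', dep_par, ih, Nat.sub_sub]

variable {T}

lemma dep_of_mem_chi {u v : V} (hv : v ∈ T.chi u) : T.dep v = T.dep u + 1 := by
  have hpos : T.dep v ≠ 0 := mt T.dep_eq_zero_iff.mp hv.1
  have hdep := T.dep_par v
  rw [hv.2] at hdep
  omega

lemma injOn_iterate_par (v : V) :
    Set.InjOn (fun j => T.par^[j] v) (Finset.range (T.dep v + 1)) := by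
  intro i hi j hj hij
  have hdep : T.dep v - i = T.dep v - j := by
    simpa only [dep_iterate_par] using congrArg T.dep hij
  have hi := Finset.mem_range.mp hi
  have hj := Finset.mem_range.mp hj
  omega

lemma branching_iff_nontrivial {v : V} : T.branching v ↔ (T.chi v).Nontrivial := by
  rw [← Set.one_lt_encard_iff_nontrivial, branching, ← one_add_one_eq_two,
    ENat.add_one_le_iff ENat.one_ne_top]

lemma encard_chi_eq_one {v : V} (hne : (T.chi v).Nonempty) (hv : ¬ T.branching v) :
    (T.chi v).encard = 1 := by
  rw [branching_iff_nontrivial, Set.not_nontrivial_iff] at hv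
  exact le_antisymm (Set.encard_le_one_iff_subsingleton.mpr hv)
    (Set.one_le_encard_iff_nonempty.mpr hne)

lemma nontrivial_level_of_branching (hleafless : ∀ u : V, (T.chi u).Nonempty) {v : V}
    (hv : T.branching v) {n : ℕ} (hn : T.dep v < n) : (T.level n).Nontrivial := by
  induction n, hn using Nat.le_induction with
  | base => exact (branching_iff_nontrivial.mp hv).mono fun w hw => dep_of_mem_chi hw
  | succ n _ ih =>
    obtain ⟨x, hx, y, hy, hxy⟩ := ih
    obtain ⟨a, ha⟩ := hleafless x
    obtain ⟨b, hb⟩ := hleafless y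
    refine ⟨a, (dep_of_mem_chi ha).trans (congrArg (· + 1) hx), b,
      (dep_of_mem_chi hb).trans (congrArg (· + 1) hy), ?_⟩
    rintro rfl
    exact hxy (ha.2.symm.trans hb.2)

variable [DecidableEq V]

variable (T) in
/-- The vertices on the path from `v` up to the root, both ends included. -/
def ancestors (v : V) : Finset V := (Finset.range (T.dep v + 1)).image fun j => T.par^[j] v

lemma sum_ancestors {M : Type*} [AddCommMonoid M] (f : V → M) (v : V) :
    ∑ w ∈ T.ancestors v, f w = ∑ j ∈ Finset.range (T.dep v + 1), f (T.par^[j] v) :=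
  Finset.sum_image (injOn_iterate_par v)

lemma card_ancestors (v : V) : (T.ancestors v).card = T.dep v + 1 := by
  rw [ancestors, Finset.card_image_of_injOn (injOn_iterate_par v), Finset.card_range]

lemma exists_iterate_par_of_mem_ancestors {u v : V} (h : u ∈ T.ancestors v) :
    ∃ j ≤ T.dep v, T.par^[j] v = u := by
  simpa only [ancestors, Finset.mem_image, Finset.mem_range, Nat.lt_succ_iff] using h

lemma iterate_par_mem_ancestors {j : ℕ} {v : V} (hj : j ≤ T.dep v) :
    T.par^[j] v ∈ T.ancestors v :=
  Finset.mem_image_of_mem _ (Finset.mem_range_succ_iff.mpr hj)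

lemma self_mem_ancestors (v : V) : v ∈ T.ancestors v :=
  iterate_par_mem_ancestors (Nat.zero_le _)

lemma root_mem_ancestors (v : V) : T.root ∈ T.ancestors v := by
  have hroot : T.par^[T.dep v] v = T.root := by
    rw [← dep_eq_zero_iff, dep_iterate_par, Nat.sub_self]
  exact hroot ▸ iterate_par_mem_ancestors le_rfl

lemma dep_le_of_mem_ancestors {u v : V} (h : u ∈ T.ancestors v) : T.dep u ≤ T.dep v := by
  obtain ⟨j, -, rfl⟩ := exists_iterate_par_of_mem_ancestors h
  exact (T.dep_iterate_par j v).trans_le (Nat.sub_le _ _)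

lemma injOn_dep_ancestors (v : V) : Set.InjOn T.dep (T.ancestors v) := by
  intro x hx y hy hxy
  obtain ⟨i, hi, rfl⟩ := exists_iterate_par_of_mem_ancestors hx
  obtain ⟨j, hj, rfl⟩ := exists_iterate_par_of_mem_ancestors hy
  rw [dep_iterate_par, dep_iterate_par] at hxy
  rw [show i = j by omega]

lemma mem_ancestors_par {u v : V} (h : u ∈ T.ancestors v) (hne : u ≠ v) :
    u ∈ T.ancestors (T.par v) := by
  obtain ⟨_ | j, hj, rfl⟩ := exists_iterate_par_of_mem_ancestors h
  · exact absurd rfl hne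
  · rw [Function.iterate_succ_apply]
    exact iterate_par_mem_ancestors (by rw [dep_par]; omega)

lemma injOn_dep_descendants {u : V} (hu : ∀ v, u ∈ T.ancestors v → ¬ T.branching v) :
    Set.InjOn T.dep {v | u ∈ T.ancestors v} := by
  intro v (hv : u ∈ T.ancestors v) w (hw : u ∈ T.ancestors w) hvw
  induction hn : T.dep v generalizing v w with
  | zero => rw [T.dep_eq_zero_iff.mp hn, T.dep_eq_zero_iff.mp (hvw.symm.trans hn)]
  | succ n ih =>
    by_cases huv : u = v
    · exact injOn_dep_ancestors w (huv ▸ hw) (self_mem_ancestors w) hvw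
    by_cases huw : u = w
    · exact injOn_dep_ancestors v (self_mem_ancestors v) (huw ▸ hv) hvw
    have hpar : T.par v = T.par w :=
      ih (mem_ancestors_par hv huv) (mem_ancestors_par hw huw)
        (by rw [dep_par, dep_par, hvw]) (by rw [dep_par, hn, Nat.add_sub_cancel])
    have ne_root {z : V} (hz : T.dep z = n + 1) : z ≠ T.root := by
      rw [Ne, ← dep_eq_zero_iff, hz]
      exact n.succ_ne_zero
    have hsub : (T.chi (T.par v)).Subsingleton := by
      rw [← Set.not_nontrivial_iff, ← branching_iff_nontrivial]
      exact hu _ (mem_ancestors_par hv huv)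
    exact hsub ⟨ne_root hn, rfl⟩ ⟨ne_root (hvw.symm.trans hn), hpar.symm⟩

variable (T) in
/-- `C` is the bounded operator on `ℓ²(V)` induced by the Cesàro map of `T`, written `C_T`. -/
def IsCesaroOperator (C : L2 V →L[ℂ] L2 V) : Prop :=
  ∀ (f : L2 V) (v : V), C f v = T.cesaro ⇑f v

/-- The vector `e_u` of the standard orthonormal basis of `ℓ²(V)`. -/
def basisVec (u : V) : L2 V := lp.single 2 u 1

lemma inner_basisVec_left (u : V) (f : L2 V) : inner ℂ (basisVec u) f = f u := by
  rw [basisVec, lp.inner_single_left, RCLike.inner_apply, map_one, mul_one]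

lemma basisVec_apply (u v : V) : basisVec u v = if u = v then 1 else 0 := by
  simp only [basisVec, lp.single_apply, Pi.single_apply, eq_comm]

lemma inner_sum_basisVec (s t : Finset V) :
    inner ℂ (∑ w ∈ s, basisVec w) (∑ w ∈ t, basisVec w) = ((s ∩ t).card : ℂ) := by
  rw [sum_inner]
  simp only [inner_sum, inner_basisVec_left, basisVec_apply, Finset.sum_ite_eq',
    Finset.sum_boole, Finset.filter_mem_eq_inter]

namespace IsCesaroOperator

open ContinuousLinearMap (adjoint)

variable {C : L2 V →L[ℂ] L2 V}

lemma apply_eq_sum_ancestors (hC : T.IsCesaroOperator C) (f : L2 V) (v : V) :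
    C f v = ((T.dep v : ℂ) + 1)⁻¹ * ∑ w ∈ T.ancestors v, f w := by
  rw [hC, cesaro, sum_ancestors]

lemma apply_basisVec (hC : T.IsCesaroOperator C) (u v : V) :
    C (basisVec u) v = if u ∈ T.ancestors v then ((T.dep v : ℂ) + 1)⁻¹ else 0 := by
  simp only [hC.apply_eq_sum_ancestors, basisVec_apply, Finset.sum_ite_eq, mul_ite, mul_one,
    mul_zero]

lemma inner_apply_basisVec_eq_zero (hC : T.IsCesaroOperator C) {x y : V} (hxy : x ≠ y)
    (hdep : T.dep x = T.dep y) : inner ℂ (C (basisVec x)) (C (basisVec y)) = 0 := by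
  have pointwise (v : V) : inner ℂ (C (basisVec x) v) (C (basisVec y) v) = 0 := by
    by_cases hx : x ∈ T.ancestors v
    · have hy : y ∉ T.ancestors v := fun hy => hxy (injOn_dep_ancestors v hx hy hdep)
      rw [hC.apply_basisVec y, if_neg hy, inner_zero_right]
    · rw [hC.apply_basisVec x, if_neg hx, inner_zero_left]
  simp only [lp.inner_eq_tsum, pointwise, tsum_zero]

lemma norm_sq_apply_basisVec_le (hC : T.IsCesaroOperator C) {u : V}
    (hu : ∀ v, u ∈ T.ancestors v → ¬ T.branching v) :
    ‖C (basisVec u)‖ ^ 2 ≤ ((T.dep u : ℝ) + 1 / 2)⁻¹ := by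
  have norm_sq_eq_tsum : ‖C (basisVec u)‖ ^ 2 = ∑' v, ‖C (basisVec u) v‖ ^ 2 := by
    simpa using lp.norm_rpow_eq_tsum (p := 2) (by norm_num) (C (basisVec u))
  have norm_sq_apply (v : V) : ‖C (basisVec u) v‖ ^ 2 =
      if u ∈ T.ancestors v then (((T.dep v : ℝ) + 1) ^ 2)⁻¹ else 0 := by
    rw [hC.apply_basisVec]
    split_ifs
    · rw [norm_inv, inv_pow, ← Nat.cast_add_one, Complex.norm_natCast, Nat.cast_add_one]
    · simp
  rw [norm_sq_eq_tsum]
  refine Real.tsum_le_of_sum_le (fun _ => by positivity) fun s => ?_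
  have hinj : Set.InjOn T.dep (s.filter fun v => u ∈ T.ancestors v) :=
    (injOn_dep_descendants hu).mono fun v hv => (Finset.mem_filter.mp hv).2
  calc ∑ v ∈ s, ‖C (basisVec u) v‖ ^ 2
      = ∑ v ∈ s with u ∈ T.ancestors v, (((T.dep v : ℝ) + 1) ^ 2)⁻¹ := by
        simp only [norm_sq_apply, Finset.sum_filter]
    _ = ∑ n ∈ (s.filter fun v => u ∈ T.ancestors v).image T.dep, (((n : ℝ) + 1) ^ 2)⁻¹ :=
        (Finset.sum_image (f := fun n : ℕ => (((n : ℝ) + 1) ^ 2)⁻¹) hinj).symm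
    _ ≤ ((T.dep u : ℝ) + 1 / 2)⁻¹ := by
        refine sum_inv_sq_add_one_le _ fun n hn => ?_
        obtain ⟨v, hv, rfl⟩ := Finset.mem_image.mp hn
        exact dep_le_of_mem_ancestors (Finset.mem_filter.mp hv).2

lemma adjoint_basisVec (hC : T.IsCesaroOperator C) (v : V) :
    adjoint C (basisVec v) = ((T.dep v : ℂ) + 1)⁻¹ • ∑ w ∈ T.ancestors v, basisVec w := by
  refine ext_inner_right ℂ fun f => ?_
  rw [ContinuousLinearMap.adjoint_inner_left, inner_basisVec_left, hC.apply_eq_sum_ancestors,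
    inner_smul_left, sum_inner]
  simp only [inner_basisVec_left, map_inv₀, map_add, map_natCast, map_one]

lemma re_inner_adjoint_basisVec (hC : T.IsCesaroOperator C) (x y : V) :
    RCLike.re (inner ℂ (adjoint C (basisVec x)) (adjoint C (basisVec y))) =
      ((T.dep x : ℝ) + 1)⁻¹ * ((T.dep y : ℝ) + 1)⁻¹ * (T.ancestors x ∩ T.ancestors y).card := by
  rw [hC.adjoint_basisVec, hC.adjoint_basisVec, inner_smul_left, inner_smul_right,
    inner_sum_basisVec, ← mul_assoc, map_inv₀, map_add, map_natCast, map_one]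
  simpa only [RCLike.re_to_complex, Complex.ofReal_inv, Complex.ofReal_mul, Complex.ofReal_add,
    Complex.ofReal_one, Complex.ofReal_natCast] using Complex.ofReal_re
    (((T.dep x : ℝ) + 1)⁻¹ * ((T.dep y : ℝ) + 1)⁻¹ * (T.ancestors x ∩ T.ancestors y).card)

lemma norm_sq_adjoint_basisVec (hC : T.IsCesaroOperator C) (v : V) :
    ‖adjoint C (basisVec v)‖ ^ 2 = ((T.dep v : ℝ) + 1)⁻¹ := by
  have hpos : (T.dep v : ℝ) + 1 ≠ 0 := Nat.cast_add_one_ne_zero _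
  rw [← inner_self_eq_norm_sq (𝕜 := ℂ), hC.re_inner_adjoint_basisVec, Finset.inter_self,
    card_ancestors, Nat.cast_add_one, inv_mul_cancel_right₀ hpos]

lemma inv_mul_inv_le_re_inner_adjoint_basisVec (hC : T.IsCesaroOperator C) (x y : V) :
    ((T.dep x : ℝ) + 1)⁻¹ * ((T.dep y : ℝ) + 1)⁻¹ ≤
      RCLike.re (inner ℂ (adjoint C (basisVec x)) (adjoint C (basisVec y))) := by
  have one_le_card : (1 : ℝ) ≤ (T.ancestors x ∩ T.ancestors y).card :=
    Nat.one_le_cast.mpr <| Finset.card_pos.mpr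
      ⟨T.root, Finset.mem_inter.mpr ⟨root_mem_ancestors x, root_mem_ancestors y⟩⟩
  rw [hC.re_inner_adjoint_basisVec]
  exact le_mul_of_one_le_right (by positivity) one_le_card

lemma norm_apply_add_lt_norm_adjoint_add (hC : T.IsCesaroOperator C) {x y : V} (hxy : x ≠ y)
    (hdep : T.dep x = T.dep y) (hx : ∀ v, x ∈ T.ancestors v → ¬ T.branching v)
    (hy : ∀ v, y ∈ T.ancestors v → ¬ T.branching v) :
    ‖C (basisVec x + basisVec y)‖ < ‖adjoint C (basisVec x + basisVec y)‖ := by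
  have dep_pos : 0 < T.dep x := by
    refine Nat.pos_of_ne_zero fun h => hxy ?_
    rw [T.dep_eq_zero_iff.mp h, T.dep_eq_zero_iff.mp (hdep.symm.trans h)]
  set d : ℝ := (T.dep x : ℝ) with hd
  have hdy : (T.dep y : ℝ) = d := by rw [← hdep]
  have upper : ‖C (basisVec x + basisVec y)‖ ^ 2 ≤ 2 * (d + 1 / 2)⁻¹ := by
    rw [map_add, norm_add_sq (𝕜 := ℂ), hC.inner_apply_basisVec_eq_zero hxy hdep, map_zero]
    have hCx := hC.norm_sq_apply_basisVec_le hx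
    have hCy := hC.norm_sq_apply_basisVec_le hy
    rw [hdy] at hCy
    linarith
  have lower : 2 * ((d + 1)⁻¹ + ((d + 1) ^ 2)⁻¹) ≤ ‖adjoint C (basisVec x + basisVec y)‖ ^ 2 := by
    rw [map_add, norm_add_sq (𝕜 := ℂ), hC.norm_sq_adjoint_basisVec, hC.norm_sq_adjoint_basisVec]
    have hcross := hC.inv_mul_inv_le_re_inner_adjoint_basisVec x y
    rw [hdy, ← hd, ← mul_inv, ← sq] at hcross
    rw [hdy]
    linarith
  refine lt_of_pow_lt_pow_left₀ 2 (norm_nonneg _) ?_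
  calc ‖C (basisVec x + basisVec y)‖ ^ 2
      ≤ 2 * (d + 1 / 2)⁻¹ := upper
    _ < 2 * ((d + 1)⁻¹ + ((d + 1) ^ 2)⁻¹) := by
        gcongr
        exact inv_add_half_lt (Nat.cast_pos.mpr dep_pos)
    _ ≤ ‖adjoint C (basisVec x + basisVec y)‖ ^ 2 := lower

end IsCesaroOperator

end TreeData

/-- If the bounded Cesàro operator of a leafless, locally finite rooted
directed tree of finite branching index is hyponormal, then the tree has no branching vertex:
every vertex has exactly one child. -/
theorem cesaro_hyponormal_implies_chain {V : Type} [Countable V] [Infinite V]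
    (T : TreeData V)
    (hleafless : ∀ u : V, (T.chi u).Nonempty)
    (hlocfin : ∀ u : V, (T.chi u).Finite)
    (hfbi : ∃ B : ℕ, ∀ v : V, T.branching v → T.dep v ≤ B)
    (C : L2 V →L[ℂ] L2 V) (hC : ∀ (f : L2 V) (v : V), C f v = T.cesaro ⇑f v)
    (hhypo : ∀ f : L2 V, ‖ContinuousLinearMap.adjoint C f‖ ≤ ‖C f‖) :
    ∀ v : V, (T.chi v).encard = 1 := by
  classical
  intro v
  refine TreeData.encard_chi_eq_one (hleafless v) fun hv => ?_
  obtain ⟨B, hB⟩ := hfbi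
  obtain ⟨x, hx : T.dep x = B + 1, y, hy : T.dep y = B + 1, hxy⟩ :=
    TreeData.nontrivial_level_of_branching hleafless hv (Nat.lt_succ_of_le (hB v hv))
  have not_branching_below {u : V} (hu : T.dep u = B + 1) :
      ∀ w, u ∈ T.ancestors w → ¬ T.branching w := fun w hw hbranch =>
    absurd ((TreeData.dep_le_of_mem_ancestors hw).trans (hB w hbranch)) (by omega)
  have hcesaro : T.IsCesaroOperator C := hC
  exact (hhypo _).not_gt <| hcesaro.norm_apply_add_lt_norm_adjoint_add hxy (hx.trans hy.symm)
    (not_branching_below hx) (not_branching_below hy)
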